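/- The general rules of SKSg reduce to atomic form: the rule i↓ is derivable from {ai↓, s}, the rule w↓ is derivable from {aw↓, s}, and the rule c↓ is derivable from {ac↓, m}; dually, i↑ is derivable from {ai↑, s}, w↑ from {aw↑, s}, and c↑ from {ac↑, m}. Here a rule ρ is derivable from a set S of rules if for every instance of ρ with premise P and conclusion Q there exists a derivation from P to Q using only rules of S. -/

import Mathlib

/-!
Negation turns each rule upside down: it exchanges `i↓`, `w↓`, `c↓` and their atomic forms with
their `↑` counterparts and fixes switch and medial. A derivation from `P` to `Q` therefore dualizes
to one from `¬Q` to `¬P`, and only the `↓` half has to be proved. Derivability is a preorder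
compatible with both connectives, so this is an induction on the formula which the rule introduces
or contracts. In the compound cases `i↓` needs two switches and `c↓` on a conjunction one medial,
while `w↓` needs a switch only for the unit `t`: `f = (f,[t,t])` yields `[(f,t),t] = t`.
-/

/-!
Deep-inference systems SKSg, SKS and KS for classical propositional logic
(the calculus of structures).  Formulas are built from atoms `a`, their
negations `ā`, and the units `t` (true) and `f` (false) by disjunction
`[P,Q]` (`dis`) and conjunction `(P,Q)` (`con`), and are considered modulo
the congruence `Equiv` generated by associativity, commutativity and the
unit laws.  Rules apply inside an arbitrary one-hole context and modulo the
equivalence.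
-/

namespace DI

/-- Formulas of the calculus of structures for classical logic:
units `t`, `f`; atoms `pos a`; negated atoms `neg a`; disjunction `dis`
(written `[P,Q]`); conjunction `con` (written `(P,Q)`). -/
inductive F : Type where
  | tt  : F
  | ff  : F
  | pos : ℕ → F
  | neg : ℕ → F
  | dis : F → F → F
  | con : F → F → F
deriving DecidableEq

/-- Negation, pushed to the atoms by the De Morgan laws:
`¬t = f`, `¬f = t`, `¬[P,Q] = (¬P,¬Q)`, `¬(P,Q) = [¬P,¬Q]`, `¬¬P = P`. -/
def F.negF : F → F
  | .tt => .ff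
  | .ff => .tt
  | .pos a => .neg a
  | .neg a => .pos a
  | .dis P Q => .con P.negF Q.negF
  | .con P Q => .dis P.negF Q.negF

/-- Atoms are the propositional symbols and their negations. -/
def F.isAtom : F → Prop
  | .pos _ => True
  | .neg _ => True
  | _ => False

/-- Syntactic equivalence of formulas: the smallest congruence generated by
associativity and commutativity of both connectives and the unit laws
`[t,t]=t`, `(f,f)=f`, `[f,P]=P`, `(t,P)=P`. -/
inductive Equiv : F → F → Prop where
  | refl (P : F) : Equiv P P
  | symm {P Q : F} : Equiv P Q → Equiv Q P
  | trans {P Q R : F} : Equiv P Q → Equiv Q R → Equiv P R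
  | disComm (P Q : F) : Equiv (.dis P Q) (.dis Q P)
  | conComm (P Q : F) : Equiv (.con P Q) (.con Q P)
  | disAssoc (P Q R : F) : Equiv (.dis (.dis P Q) R) (.dis P (.dis Q R))
  | conAssoc (P Q R : F) : Equiv (.con (.con P Q) R) (.con P (.con Q R))
  | ttDis : Equiv (.dis .tt .tt) .tt
  | ffCon : Equiv (.con .ff .ff) .ff
  | ffDis (P : F) : Equiv (.dis .ff P) P
  | ttCon (P : F) : Equiv (.con .tt P) P
  | disCongr {P P' Q Q' : F} :
      Equiv P P' → Equiv Q Q' → Equiv (.dis P Q) (.dis P' Q')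
  | conCongr {P P' Q Q' : F} :
      Equiv P P' → Equiv Q Q' → Equiv (.con P Q) (.con P' Q')

/-- One-hole contexts. -/
inductive Ctx : Type where
  | hole : Ctx
  | disL : Ctx → F → Ctx
  | disR : F → Ctx → Ctx
  | conL : Ctx → F → Ctx
  | conR : F → Ctx → Ctx

/-- Plugging a formula into the hole of a context. -/
def Ctx.fill : Ctx → F → F
  | .hole, P => P
  | .disL C Q, P => .dis (C.fill P) Q
  | .disR Q C, P => .dis Q (C.fill P)
  | .conL C Q, P => .con (C.fill P) Q
  | .conR Q C, P => .con Q (C.fill P)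

/-- Names of the inference rules of SKSg and SKS. -/
inductive Rule : Type where
  | iDown | iUp | wDown | wUp | cDown | cUp | s | m
  | aiDown | aiUp | awDown | awUp | acDown | acUp
deriving DecidableEq

/-- The rules, read at the root of a formula (premise on the left,
conclusion on the right). -/
inductive RootStep : Rule → F → F → Prop where
  | iDown (P : F) : RootStep .iDown .tt (.dis P P.negF)
  | iUp (P : F) : RootStep .iUp (.con P P.negF) .ff
  | wDown (P : F) : RootStep .wDown .ff P
  | wUp (P : F) : RootStep .wUp P .tt
  | cDown (P : F) : RootStep .cDown (.dis P P) P
  | cUp (P : F) : RootStep .cUp P (.con P P)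
  | s (P Q R : F) : RootStep .s (.con P (.dis Q R)) (.dis (.con P Q) R)
  | m (P Q R S : F) :
      RootStep .m (.dis (.con P Q) (.con R S)) (.con (.dis P R) (.dis Q S))
  | aiDown (A : F) (h : A.isAtom) : RootStep .aiDown .tt (.dis A A.negF)
  | aiUp (A : F) (h : A.isAtom) : RootStep .aiUp (.con A A.negF) .ff
  | awDown (A : F) (h : A.isAtom) : RootStep .awDown .ff A
  | awUp (A : F) (h : A.isAtom) : RootStep .awUp A .tt
  | acDown (A : F) (h : A.isAtom) : RootStep .acDown (.dis A A) A
  | acUp (A : F) (h : A.isAtom) : RootStep .acUp A (.con A A)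

/-- One inference step using a rule from the set `Rs`, applied inside an
arbitrary context and modulo the equivalence. -/
def Step (Rs : Set Rule) (P Q : F) : Prop :=
  ∃ r ∈ Rs, ∃ (C : Ctx) (P' Q' : F),
    RootStep r P' Q' ∧ Equiv P (C.fill P') ∧ Equiv (C.fill Q') Q

/-- Derivations over an arbitrary step relation: a finite sequence of rule
instances from the premise to the conclusion (modulo the equivalence). -/
inductive Deriv (St : F → F → Prop) : F → F → Prop where
  | eqv {P Q : F} : Equiv P Q → Deriv St P Q
  | step {P Q R : F} : St P Q → Deriv St Q R → Deriv St P R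

/-- The system SKSg: general (non-atomic) rules plus switch. -/
def SKSg : Set Rule := {.iDown, .iUp, .wDown, .wUp, .cDown, .cUp, .s}

/-- The system SKS: atomic rules plus switch and medial. -/
def SKS : Set Rule := {.aiDown, .aiUp, .awDown, .awUp, .acDown, .acUp, .s, .m}

/-- The system KS: the down fragment of SKS. -/
def KS : Set Rule := {.aiDown, .awDown, .acDown, .s, .m}

/-- A proof of `Q` in the system `Rs` is a derivation from the unit `t` to `Q`. -/
def Proof (Rs : Set Rule) (Q : F) : Prop := Deriv (Step Rs) .tt Q

/-- A rule `r` is derivable from a set `Rs` of rules if every instance of `r`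
(with premise `P` and conclusion `Q`) can be replaced by a derivation from
`P` to `Q` using only rules of `Rs`. -/
def RuleDerivable (r : Rule) (Rs : Set Rule) : Prop :=
  ∀ P Q : F, Step {r} P Q → Deriv (Step Rs) P Q

end DI

namespace DI

local infixr:70 " ⋏ " => F.con
local infixr:65 " ⋎ " => F.dis
local infix:50 " ≋ " => Equiv
local notation:50 P:51 " ⊢[" Rs "] " Q:51 => Deriv (Step Rs) P Q

variable {r : Rule} {Rs Rs' : Set Rule} {P P' Q Q' R : F}

instance : Trans Equiv Equiv Equiv := ⟨.trans⟩

namespace Equiv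

theorem disFf (P : F) : P ⋎ .ff ≋ P := (disComm P .ff).trans (ffDis P)

theorem conTt (P : F) : P ⋏ .tt ≋ P := (conComm P .tt).trans (ttCon P)

theorem disDisDisComm (P Q R S : F) : (P ⋎ Q) ⋎ (R ⋎ S) ≋ (P ⋎ R) ⋎ (Q ⋎ S) :=
  calc (P ⋎ Q) ⋎ (R ⋎ S)
    _ ≋ P ⋎ (Q ⋎ (R ⋎ S)) := disAssoc P Q (R ⋎ S)
    _ ≋ P ⋎ ((Q ⋎ R) ⋎ S) := disCongr (refl P) (disAssoc Q R S).symm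
    _ ≋ P ⋎ ((R ⋎ Q) ⋎ S) := disCongr (refl P) (disCongr (disComm Q R) (refl S))
    _ ≋ P ⋎ (R ⋎ (Q ⋎ S)) := disCongr (refl P) (disAssoc R Q S)
    _ ≋ (P ⋎ R) ⋎ (Q ⋎ S) := (disAssoc P R (Q ⋎ S)).symm

theorem fill (C : Ctx) (h : P ≋ Q) : C.fill P ≋ C.fill Q := by
  induction C with
  | hole => exact h
  | disL C R ih => exact disCongr ih (refl R)
  | disR R C ih => exact disCongr (refl R) ih
  | conL C R ih => exact conCongr ih (refl R)
  | conR R C ih => exact conCongr (refl R) ih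

theorem negF (h : P ≋ Q) : P.negF ≋ Q.negF := by
  induction h with
  | refl P => exact refl P.negF
  | symm _ ih => exact ih.symm
  | trans _ _ ih₁ ih₂ => exact ih₁.trans ih₂
  | disComm P Q => exact conComm P.negF Q.negF
  | conComm P Q => exact disComm P.negF Q.negF
  | disAssoc P Q R => exact conAssoc P.negF Q.negF R.negF
  | conAssoc P Q R => exact disAssoc P.negF Q.negF R.negF
  | ttDis => exact ffCon
  | ffCon => exact ttDis
  | ffDis P => exact ttCon P.negF
  | ttCon P => exact ffDis P.negF
  | disCongr _ _ ih₁ ih₂ => exact conCongr ih₁ ih₂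
  | conCongr _ _ ih₁ ih₂ => exact disCongr ih₁ ih₂

end Equiv

namespace F

theorem negF_negF (P : F) : P.negF.negF = P := by
  induction P <;> simp_all only [negF]

theorem isAtom.negF {A : F} (h : A.isAtom) : A.negF.isAtom := by
  cases A <;> exact h

end F

namespace Ctx

/-- The composite context `C{D{ }}`. -/
def comp : Ctx → Ctx → Ctx
  | .hole, D => D
  | .disL C Q, D => .disL (C.comp D) Q
  | .disR Q C, D => .disR Q (C.comp D)
  | .conL C Q, D => .conL (C.comp D) Q
  | .conR Q C, D => .conR Q (C.comp D)

theorem fill_comp (C D : Ctx) (P : F) : (C.comp D).fill P = C.fill (D.fill P) := by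
  induction C <;> simp_all only [comp, fill]

/-- The De Morgan dual of a context, with the hole left in place: the context `D{ }` such that
`¬C{P} = D{¬P}`. -/
def dual : Ctx → Ctx
  | .hole => .hole
  | .disL C Q => .conL C.dual Q.negF
  | .disR Q C => .conR Q.negF C.dual
  | .conL C Q => .disL C.dual Q.negF
  | .conR Q C => .disR Q.negF C.dual

theorem negF_fill (C : Ctx) (P : F) : (C.fill P).negF = C.dual.fill P.negF := by
  induction C <;> simp_all only [dual, fill, F.negF]

end Ctx

/-- The dual of a rule, obtained by exchanging premise and conclusion and negating both. -/
def Rule.dual : Rule → Rule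
  | .iDown => .iUp
  | .iUp => .iDown
  | .wDown => .wUp
  | .wUp => .wDown
  | .cDown => .cUp
  | .cUp => .cDown
  | .s => .s
  | .m => .m
  | .aiDown => .aiUp
  | .aiUp => .aiDown
  | .awDown => .awUp
  | .awUp => .awDown
  | .acDown => .acUp
  | .acUp => .acDown

namespace Step

theorem of_root (hr : r ∈ Rs) (h : RootStep r P Q) : Step Rs P Q :=
  ⟨r, hr, .hole, P, Q, h, .refl P, .refl Q⟩

theorem of_equiv (hP : P ≋ P') (h : Step Rs P' Q') (hQ : Q' ≋ Q) : Step Rs P Q := by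
  obtain ⟨r, hr, C, A, B, hAB, hA, hB⟩ := h
  exact ⟨r, hr, C, A, B, hAB, hP.trans hA, hB.trans hQ⟩

theorem fill (C : Ctx) (h : Step Rs P Q) : Step Rs (C.fill P) (C.fill Q) := by
  obtain ⟨r, hr, D, A, B, hAB, hA, hB⟩ := h
  refine ⟨r, hr, C.comp D, A, B, hAB, ?_, ?_⟩
  · simpa only [Ctx.fill_comp] using hA.fill C
  · simpa only [Ctx.fill_comp] using hB.fill C

end Step

theorem RootStep.dual (hr : r.dual ∈ Rs) (h : RootStep r P Q) : Step Rs Q.negF P.negF := by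
  cases h with
  | iDown => exact .of_root hr (.iUp _)
  | iUp => exact .of_root hr (.iDown _)
  | wDown => exact .of_root hr (.wUp _)
  | wUp => exact .of_root hr (.wDown _)
  | cDown => exact .of_root hr (.cUp _)
  | cUp => exact .of_root hr (.cDown _)
  | s P Q R =>
    have hs : Step Rs (R.negF ⋏ (Q.negF ⋎ P.negF)) ((R.negF ⋏ Q.negF) ⋎ P.negF) :=
      .of_root hr (.s R.negF Q.negF P.negF)
    exact .of_equiv ((Equiv.conComm _ _).trans (.conCongr (.refl _) (.disComm _ _))) hs
      ((Equiv.disComm _ _).trans (.disCongr (.refl _) (.conComm _ _)))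
  | m P Q R S => exact .of_root hr (.m P.negF R.negF Q.negF S.negF)
  | aiDown _ h => exact .of_root hr (.aiUp _ h.negF)
  | aiUp _ h => exact .of_root hr (.aiDown _ h.negF)
  | awDown _ h => exact .of_root hr (.awUp _ h.negF)
  | awUp _ h => exact .of_root hr (.awDown _ h.negF)
  | acDown _ h => exact .of_root hr (.acUp _ h.negF)
  | acUp _ h => exact .of_root hr (.acDown _ h.negF)

theorem Step.dual (hRs : Set.MapsTo Rule.dual Rs Rs') (h : Step Rs P Q) :
    Step Rs' Q.negF P.negF := by
  obtain ⟨r, hr, C, A, B, hAB, hA, hB⟩ := h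
  have hBA : Step Rs' (C.fill B).negF (C.fill A).negF := by
    simpa only [Ctx.negF_fill] using (hAB.dual (hRs hr)).fill C.dual
  exact .of_equiv hB.negF.symm hBA hA.negF.symm

namespace Deriv

theorem of_root (hr : r ∈ Rs) (h : RootStep r P Q) : P ⊢[Rs] Q :=
  .step (.of_root hr h) (.eqv (.refl Q))

theorem eqv_trans (h : P ≋ Q) (d : Q ⊢[Rs] R) : P ⊢[Rs] R := by
  cases d with
  | eqv e => exact .eqv (h.trans e)
  | step s d => exact .step (.of_equiv h s (.refl _)) d

theorem trans (d : P ⊢[Rs] Q) (e : Q ⊢[Rs] R) : P ⊢[Rs] R := by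
  induction d with
  | eqv h => exact e.eqv_trans h
  | step s _ ih => exact .step s (ih e)

instance : Trans (Deriv (Step Rs)) (Deriv (Step Rs)) (Deriv (Step Rs)) := ⟨trans⟩

instance : Trans Equiv (Deriv (Step Rs)) (Deriv (Step Rs)) := ⟨eqv_trans⟩

instance : Trans (Deriv (Step Rs)) Equiv (Deriv (Step Rs)) := ⟨fun d h => d.trans (.eqv h)⟩

theorem fill (C : Ctx) (d : P ⊢[Rs] Q) : C.fill P ⊢[Rs] C.fill Q := by
  induction d with
  | eqv h => exact .eqv (h.fill C)
  | step s _ ih => exact .step (s.fill C) ih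

theorem dis (d : P ⊢[Rs] P') (e : Q ⊢[Rs] Q') : P ⋎ Q ⊢[Rs] P' ⋎ Q' :=
  (d.fill (.disL .hole Q)).trans (e.fill (.disR P' .hole))

theorem con (d : P ⊢[Rs] P') (e : Q ⊢[Rs] Q') : P ⋏ Q ⊢[Rs] P' ⋏ Q' :=
  (d.fill (.conL .hole Q)).trans (e.fill (.conR P' .hole))

theorem dual (hRs : Set.MapsTo Rule.dual Rs Rs') (d : P ⊢[Rs] Q) : Q.negF ⊢[Rs'] P.negF := by
  induction d with
  | eqv h => exact .eqv h.negF.symm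
  | step s _ ih => exact ih.trans (.step (s.dual hRs) (.eqv (.refl _)))

theorem switch (hs : .s ∈ Rs) (P Q R : F) : P ⋏ (Q ⋎ R) ⊢[Rs] (P ⋏ Q) ⋎ R :=
  of_root hs (.s P Q R)

theorem con_dis_dis (hs : .s ∈ Rs) (P Q R S : F) :
    (P ⋎ Q) ⋏ (R ⋎ S) ⊢[Rs] (P ⋎ R) ⋎ (Q ⋏ S) :=
  calc (P ⋎ Q) ⋏ (R ⋎ S)
    _ ≋ (R ⋎ S) ⋏ (Q ⋎ P) := (Equiv.conComm _ _).trans (.conCongr (.refl _) (.disComm P Q))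
    _ ⊢[Rs] ((R ⋎ S) ⋏ Q) ⋎ P := switch hs (R ⋎ S) Q P
    _ ≋ P ⋎ (Q ⋏ (S ⋎ R)) := (Equiv.disComm _ P).trans
        (.disCongr (.refl P) ((Equiv.conComm _ Q).trans (.conCongr (.refl Q) (.disComm R S))))
    _ ⊢[Rs] P ⋎ ((Q ⋏ S) ⋎ R) := (eqv (.refl P)).dis (switch hs Q S R)
    _ ≋ P ⋎ (R ⋎ (Q ⋏ S)) := .disCongr (.refl P) (.disComm _ R)
    _ ≋ (P ⋎ R) ⋎ (Q ⋏ S) := (Equiv.disAssoc P R _).symm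

theorem iDown (ha : .aiDown ∈ Rs) (hs : .s ∈ Rs) (P : F) : .tt ⊢[Rs] P ⋎ P.negF := by
  induction P with
  | tt => exact eqv (Equiv.disFf .tt).symm
  | ff => exact eqv (Equiv.ffDis .tt).symm
  | pos a => exact of_root ha (.aiDown (.pos a) trivial)
  | neg a => exact of_root ha (.aiDown (.neg a) trivial)
  | dis P Q ihP ihQ =>
    calc F.tt
      _ ≋ .tt ⋏ .tt := (Equiv.ttCon .tt).symm
      _ ⊢[Rs] (P ⋎ P.negF) ⋏ (Q ⋎ Q.negF) := ihP.con ihQ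
      _ ⊢[Rs] (P ⋎ Q) ⋎ (P.negF ⋏ Q.negF) := con_dis_dis hs P P.negF Q Q.negF
  | con P Q ihP ihQ =>
    calc F.tt
      _ ≋ .tt ⋏ .tt := (Equiv.ttCon .tt).symm
      _ ⊢[Rs] (P ⋎ P.negF) ⋏ (Q ⋎ Q.negF) := ihP.con ihQ
      _ ≋ (P.negF ⋎ P) ⋏ (Q.negF ⋎ Q) := .conCongr (.disComm _ _) (.disComm _ _)
      _ ⊢[Rs] (P.negF ⋎ Q.negF) ⋎ (P ⋏ Q) := con_dis_dis hs P.negF P Q.negF Q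
      _ ≋ (P ⋏ Q) ⋎ (P.negF ⋎ Q.negF) := .disComm _ _

theorem ff_tt (hs : .s ∈ Rs) : .ff ⊢[Rs] .tt :=
  calc F.ff
    _ ≋ .ff ⋏ .tt := (Equiv.conTt .ff).symm
    _ ≋ .ff ⋏ (.tt ⋎ .tt) := .conCongr (.refl .ff) Equiv.ttDis.symm
    _ ⊢[Rs] (.ff ⋏ .tt) ⋎ .tt := switch hs .ff .tt .tt
    _ ≋ .ff ⋎ .tt := .disCongr (.conTt .ff) (.refl .tt)
    _ ≋ .tt := .ffDis .tt

theorem wDown (ha : .awDown ∈ Rs) (hs : .s ∈ Rs) (P : F) : .ff ⊢[Rs] P := by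
  induction P with
  | tt => exact ff_tt hs
  | ff => exact eqv (.refl .ff)
  | pos a => exact of_root ha (.awDown (.pos a) trivial)
  | neg a => exact of_root ha (.awDown (.neg a) trivial)
  | dis P Q ihP ihQ =>
    calc F.ff
      _ ≋ .ff ⋎ .ff := (Equiv.ffDis .ff).symm
      _ ⊢[Rs] P ⋎ Q := ihP.dis ihQ
  | con P Q ihP ihQ =>
    calc F.ff
      _ ≋ .ff ⋏ .ff := Equiv.ffCon.symm
      _ ⊢[Rs] P ⋏ Q := ihP.con ihQ

theorem cDown (ha : .acDown ∈ Rs) (hm : .m ∈ Rs) (P : F) : P ⋎ P ⊢[Rs] P := by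
  induction P with
  | tt => exact eqv .ttDis
  | ff => exact eqv (.ffDis .ff)
  | pos a => exact of_root ha (.acDown (.pos a) trivial)
  | neg a => exact of_root ha (.acDown (.neg a) trivial)
  | dis P Q ihP ihQ =>
    calc (P ⋎ Q) ⋎ (P ⋎ Q)
      _ ≋ (P ⋎ P) ⋎ (Q ⋎ Q) := .disDisDisComm P Q P Q
      _ ⊢[Rs] P ⋎ Q := ihP.dis ihQ
  | con P Q ihP ihQ =>
    calc (P ⋏ Q) ⋎ (P ⋏ Q)
      _ ⊢[Rs] (P ⋎ P) ⋏ (Q ⋎ Q) := of_root hm (.m P Q P Q)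
      _ ⊢[Rs] P ⋏ Q := ihP.con ihQ

end Deriv

namespace RuleDerivable

theorem of_root (h : ∀ P Q, RootStep r P Q → P ⊢[Rs] Q) : RuleDerivable r Rs := by
  rintro P Q ⟨_, rfl, C, A, B, hAB, hA, hB⟩
  calc P
    _ ≋ C.fill A := hA
    _ ⊢[Rs] C.fill B := (h A B hAB).fill C
    _ ≋ Q := hB

theorem of_dual (h : RuleDerivable r.dual (Rule.dual ⁻¹' Rs)) : RuleDerivable r Rs := by
  intro P Q hPQ
  have hQP : Step {r.dual} Q.negF P.negF := hPQ.dual (Set.mapsTo_singleton.2 rfl)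
  simpa only [F.negF_negF] using (h _ _ hQP).dual (Set.mapsTo_preimage Rule.dual Rs)

theorem iDown (ha : .aiDown ∈ Rs) (hs : .s ∈ Rs) : RuleDerivable .iDown Rs :=
  of_root fun | _, _, .iDown P => .iDown ha hs P

theorem wDown (ha : .awDown ∈ Rs) (hs : .s ∈ Rs) : RuleDerivable .wDown Rs :=
  of_root fun | _, _, .wDown P => .wDown ha hs P

theorem cDown (ha : .acDown ∈ Rs) (hm : .m ∈ Rs) : RuleDerivable .cDown Rs :=
  of_root fun | _, _, .cDown P => .cDown ha hm P

end RuleDerivable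

/-- reduction of the general rules of SKSg to atomic form.
`i↓` is derivable from `{ai↓, s}`, `w↓` from `{aw↓, s}`, `c↓` from
`{ac↓, m}`; dually, `i↑` is derivable from `{ai↑, s}`, `w↑` from `{aw↑, s}`
and `c↑` from `{ac↑, m}`. -/
theorem sksg_rules_atomic :
    RuleDerivable .iDown {.aiDown, .s} ∧
    RuleDerivable .wDown {.awDown, .s} ∧
    RuleDerivable .cDown {.acDown, .m} ∧
    RuleDerivable .iUp {.aiUp, .s} ∧
    RuleDerivable .wUp {.awUp, .s} ∧
    RuleDerivable .cUp {.acUp, .m} := by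
  exact ⟨.iDown (.inl rfl) (.inr rfl),
    .wDown (.inl rfl) (.inr rfl),
    .cDown (.inl rfl) (.inr rfl),
    .of_dual (.iDown (.inl rfl) (.inr rfl)),
    .of_dual (.wDown (.inl rfl) (.inr rfl)),
    .of_dual (.cDown (.inl rfl) (.inr rfl))⟩

end DI
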